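/- Let P : ℝⁿ → ℝ be twice continuously differentiable and let M be a real n×n matrix. If the matrix product M · HessP(x) (where HessP(x) denotes the Hessian matrix of P at x) satisfies ⟨M · HessP(x) · v, v⟩ > 0 for every x ∈ ℝⁿ and every v ≠ 0, then the vector field f(x) = −M · ∇P(x) is strictly dissipative, i.e. ⟨f(x) − f(y), x − y⟩ < 0 for all x ≠ y. -/

import Mathlib

open Matrix

/-- If `M · HessP(x)` is positive definite everywhere, then the vector field
`f(x) = −M·∇P(x)` is strictly dissipative. -/
theorem stmt_0 {n : ℕ} (P : (Fin n → ℝ) → ℝ)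
    (gradP : (Fin n → ℝ) → (Fin n → ℝ))
    (HessP : (Fin n → ℝ) → Matrix (Fin n) (Fin n) ℝ)
    (M : Matrix (Fin n) (Fin n) ℝ)
    (hP : ContDiff ℝ 2 P)
    (hgrad : ∀ x v, fderiv ℝ P x v = gradP x ⬝ᵥ v)
    (hHess : ∀ x, HasFDerivAt gradP
      (LinearMap.toContinuousLinearMap (HessP x).mulVecLin) x)
    (hpos : ∀ (x v : Fin n → ℝ), v ≠ 0 → 0 < ((M * HessP x).mulVec v) ⬝ᵥ v) :
    ∀ x y : Fin n → ℝ, x ≠ y →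
      ((-(M.mulVec (gradP x))) - (-(M.mulVec (gradP y)))) ⬝ᵥ (x - y) < 0 := by
  intro x y hxy
  have hv : x - y ≠ 0 := sub_ne_zero.mpr hxy
  let L : (Fin n → ℝ) →L[ℝ] ℝ := LinearMap.toContinuousLinearMap
    { toFun := fun w => (M.mulVec w) ⬝ᵥ (x - y)
      map_add' := fun a b => by rw [Matrix.mulVec_add, add_dotProduct]
      map_smul' := fun c a => by
        rw [Matrix.mulVec_smul, smul_dotProduct, RingHom.id_apply] }
  have hL : ∀ w, L w = (M.mulVec w) ⬝ᵥ (x - y) := fun w => rfl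
  have hline : ∀ t : ℝ, HasDerivAt (fun t : ℝ => y + t • (x - y)) (x - y) t := by
    intro t
    simpa using ((hasDerivAt_id t).smul_const (x - y)).const_add y
  have hder : ∀ t : ℝ, HasDerivAt (fun t : ℝ => L (gradP (y + t • (x - y))))
      (((M * HessP (y + t • (x - y))).mulVec (x - y)) ⬝ᵥ (x - y)) t := by
    intro t
    have h1 := (hHess (y + t • (x - y))).comp_hasDerivAt t (hline t)
    have h2 := L.hasFDerivAt.comp_hasDerivAt t h1
    rw [← Matrix.mulVec_mulVec]
    exact h2
  have hmono : StrictMono (fun t : ℝ => L (gradP (y + t • (x - y)))) := by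
    apply strictMono_of_deriv_pos
    intro t
    rw [(hder t).deriv]
    exact hpos _ _ hv
  have h := hmono (zero_lt_one : (0 : ℝ) < 1)
  simp only [zero_smul, one_smul, add_zero, add_sub_cancel, hL] at h
  rw [sub_dotProduct, neg_dotProduct, neg_dotProduct]
  linarith
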